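/- Let k ∈ (0,1). For every n ∈ ℕ, Kuznetsov's moment integrals satisfy Σ_{j=0}^{n} (n − 3j) C(2n+3, 2j+1) I_j^+ I_{n−j}^− = 0, where C(a,b) denotes the binomial coefficient. -/

import Mathlib

/-!
Write `a = K`, `b = K'`, `α = (b + ia) / 2` and `β = ᾱ`. The substitution `x = t²` and, for
`ε = ±1`, the factorization
`2 (cosh bt - ε cos at) = (e^{αt} - ε e^{-αt}) (e^{βt} - ε e^{-βt})`
allow both factors of the denominator to be expanded in geometric series and integrated term by
term. This produces the terms with `m ≥ 0` of a lattice sum over `(2n + 1)α + (2m + 1)β`, `n ≥ 0`,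
`m ∈ ℤ`. The rotation `(α, β) ↦ (-iα, iβ)` exchanges `a` and `b` and, up to sign, amounts to
`m ↦ -(m + 1)`, so the integral over the negative half-line supplies the terms with `m < 0`.

Lipschitz's formula in `m`, followed by an exchange of summations, turns the lattice sum into a
Lambert series in `y = exp(πiα / (2β))`. For `ε = -1` this is a multiple of an odd moment of the
sequence `(-1)^s / (y^r + y^{-r})`, `r = 2s + 1`, over all odd integers `r`. For `ε = 1` it is a
multiple of an even moment of the convolution of this sequence with itself, because the products
`(y^r + y^{-r})⁻¹ (y^{2N-r} + y^{r-2N})⁻¹` telescope after a partial fraction decomposition.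

The moments of a self-convolution have exponential generating function `F²`, where `F` is that of
the moments of the original sequence. The identity is therefore the coefficient of `X^{2n+3}` in
`F · X (F²)' = 2 X F' · F²`, the even moments being zero by symmetry.
-/

open MeasureTheory Real

/-- The complete elliptic integral of the first kind `K(k)`. -/
noncomputable def ellipticK (k : ℝ) : ℝ :=
  ∫ θ in (0 : ℝ)..(π / 2), (1 - k ^ 2 * Real.sin θ ^ 2) ^ (-(1 / 2) : ℝ)

/-- Kuznetsov's moment integral `I_n^+`, realizing
`(1/2)∫_ℝ x^n dx/(cos(√x K) + cosh(√x K'))` with `√x = i√(−x)` for `x < 0`. -/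
noncomputable def Iplus (k : ℝ) (n : ℕ) : ℝ :=
  (1 / 2) * (∫ x in Set.Ioi (0 : ℝ), x ^ n /
      (Real.cos (ellipticK k * Real.sqrt x) +
        Real.cosh (ellipticK (Real.sqrt (1 - k ^ 2)) * Real.sqrt x)))
  + ((-1 : ℝ) ^ n / 2) * (∫ x in Set.Ioi (0 : ℝ), x ^ n /
      (Real.cosh (ellipticK k * Real.sqrt x) +
        Real.cos (ellipticK (Real.sqrt (1 - k ^ 2)) * Real.sqrt x)))

/-- Kuznetsov's moment integral `I_n^−`, realizing
`∫_ℝ x^{n+1} dx/(cos(√x K) − cosh(√x K'))` with `√x = i√(−x)` for `x < 0`. -/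
noncomputable def Iminus (k : ℝ) (n : ℕ) : ℝ :=
  (∫ x in Set.Ioi (0 : ℝ), x ^ (n + 1) /
      (Real.cos (ellipticK k * Real.sqrt x) -
        Real.cosh (ellipticK (Real.sqrt (1 - k ^ 2)) * Real.sqrt x)))
  + (-1 : ℝ) ^ (n + 1) * (∫ x in Set.Ioi (0 : ℝ), x ^ (n + 1) /
      (Real.cosh (ellipticK k * Real.sqrt x) -
        Real.cos (ellipticK (Real.sqrt (1 - k ^ 2)) * Real.sqrt x)))

open Filter Topology
open Complex (I)
open Finset.HasAntidiagonal (antidiagonal)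
open scoped Nat ComplexConjugate PowerSeries

/-! ### Binomial convolution -/

lemma sum_range_two_mul {M : Type*} [AddCommMonoid M] (f : ℕ → M) (N : ℕ) :
    ∑ i ∈ Finset.range (2 * N), f i = ∑ j ∈ Finset.range N, (f (2 * j) + f (2 * j + 1)) := by
  induction N with
  | zero => simp
  | succ N ih =>
    rw [Finset.sum_range_succ, ← ih, mul_add, mul_one, Finset.sum_range_succ,
      Finset.sum_range_succ, add_assoc]

section BinomialConvolution

variable {K : Type*} [Field K]

/-- The binomial convolution of two sequences, which corresponds to the product of their exponential
generating functions. -/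
def binomConv (a b : ℕ → K) (n : ℕ) : K :=
  ∑ p ∈ antidiagonal n, (n.choose p.1 : K) * (a p.1 * b p.2)

/-- The exponential generating function `∑ aₙ Xⁿ / n!` of a sequence. -/
def egf (a : ℕ → K) : K⟦X⟧ :=
  PowerSeries.mk fun n => a n / n !

lemma X_mul_derivative_egf (a : ℕ → K) :
    PowerSeries.X * d⁄dX K (egf a) = egf fun n => n * a n := by
  ext n
  cases n with
  | zero => simp [egf]
  | succ n =>
    rw [PowerSeries.coeff_succ_X_mul, PowerSeries.coeff_derivative, egf, egf,
      PowerSeries.coeff_mk, PowerSeries.coeff_mk, Nat.cast_succ]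
    ring

variable [CharZero K]

lemma egf_injective : Function.Injective (egf (K := K)) := by
  intro a b hab
  funext n
  have h := congrArg (PowerSeries.coeff n) hab
  rwa [egf, egf, PowerSeries.coeff_mk, PowerSeries.coeff_mk,
    div_left_inj' (Nat.cast_ne_zero.2 n.factorial_ne_zero)] at h

lemma egf_binomConv (a b : ℕ → K) : egf (binomConv a b) = egf a * egf b := by
  ext n
  simp only [egf, binomConv, PowerSeries.coeff_mul, PowerSeries.coeff_mk, Finset.sum_div]
  refine Finset.sum_congr rfl fun p hp => ?_
  rw [← Finset.HasAntidiagonal.mem_antidiagonal.1 hp, Nat.cast_add_choose]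
  have := (Nat.cast_ne_zero (R := K)).2 (p.1 + p.2).factorial_ne_zero
  field_simp

/-- This is the identity `F · (F²)' = 2 F' · F²` for `F = egf a`. -/
lemma sum_sub_three_mul_choose_mul_binomConv_self (a : ℕ → K) (r : ℕ) :
    ∑ i ∈ Finset.range (r + 1),
      ((r : K) - 3 * i) * r.choose i * a i * binomConv a a (r - i) = 0 := by
  have hconv : binomConv a (fun n => n * binomConv a a n) =
      binomConv (fun n => 2 * (n * a n)) (binomConv a a) := by
    have htwo : egf (fun n => 2 * (n * a n)) = 2 * egf fun n => n * a n := by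
      ext n
      rw [two_mul, map_add, egf, egf, PowerSeries.coeff_mk, PowerSeries.coeff_mk]
      ring
    apply egf_injective
    rw [egf_binomConv, egf_binomConv, htwo, ← X_mul_derivative_egf, ← X_mul_derivative_egf,
      egf_binomConv, Derivation.leibniz, smul_eq_mul]
    ring
  have hcoeff := sub_eq_zero.2 (congrFun hconv r)
  rw [binomConv, binomConv, ← Finset.sum_sub_distrib,
    Finset.Nat.sum_antidiagonal_eq_sum_range_succ_mk] at hcoeff
  rw [← hcoeff]
  refine Finset.sum_congr rfl fun i hi => ?_
  rw [Nat.cast_sub (Finset.mem_range_succ_iff.1 hi)]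
  ring

lemma sum_sub_three_mul_choose_mul_binomConv_self_of_even {a : ℕ → K}
    (ha : ∀ i, Even i → a i = 0) (n : ℕ) :
    ∑ j ∈ Finset.range (n + 1), ((n : K) - 3 * j) * (2 * n + 3).choose (2 * j + 1) *
      (a (2 * j + 1) * binomConv a a (2 * (n - j + 1))) = 0 := by
  have h := sum_sub_three_mul_choose_mul_binomConv_self a (2 * n + 3)
  have hzero : binomConv a a 0 = 0 := by simp [binomConv, ha 0 Even.zero]
  rw [show 2 * n + 3 + 1 = 2 * (n + 2) by ring, sum_range_two_mul, Finset.sum_range_succ,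
    show 2 * n + 3 - (2 * (n + 1) + 1) = 0 by omega, hzero, ha _ (even_two_mul _), mul_zero,
    mul_zero, zero_mul, add_zero, add_zero] at h
  rw [← mul_eq_zero_iff_left (two_ne_zero' K), ← h, Finset.mul_sum]
  refine Finset.sum_congr rfl fun j hj => ?_
  have hj' := Finset.mem_range_succ_iff.1 hj
  rw [ha _ (even_two_mul j), show 2 * n + 3 - (2 * j + 1) = 2 * (n - j + 1) by omega]
  push_cast
  ring

end BinomialConvolution

/-! ### Series over the integers -/

section IntegerSeries

lemma hasSum_int_even_add_odd {M : Type*} [AddCommMonoid M] [TopologicalSpace M] [ContinuousAdd M]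
    {f : ℤ → M} {x y : M} (heven : HasSum (fun k => f (2 * k)) x)
    (hodd : HasSum (fun k => f (2 * k + 1)) y) : HasSum f (x + y) := by
  have hinj := mul_right_injective₀ (two_ne_zero' ℤ)
  have hodd' := ((add_left_injective 1).comp hinj).hasSum_range_iff.2 hodd
  refine (hinj.hasSum_range_iff.2 heven).add_isCompl ?_ hodd'
  convert! Int.isCompl_even_odd using 1
  · ext n
    simp [even_iff_exists_two_mul]
  · ext n
    simp [Odd, eq_comm]

variable {E : Type*} [AddCommGroup E] [TopologicalSpace E] [IsTopologicalAddGroup E]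

/-- Comparing `f` with a step function avoids limits of partial sums: the difference is summable,
hence has the same sum as its shift. -/
lemma hasSum_sub_shift_one {f : ℤ → E} {L : E}
    (hf : Summable fun s => f s - if 0 ≤ s then L else 0) :
    HasSum (fun s => f s - f (s - 1)) L := by
  have hdiff := hf.hasSum.sub ((Equiv.subRight (1 : ℤ)).hasSum_iff.2 hf.hasSum)
  have hsum := hdiff.add (hasSum_ite_eq 0 L)
  rw [sub_self, zero_add] at hsum
  refine hsum.congr_fun fun s => ?_
  simp only [Function.comp_apply, Equiv.subRight_apply]
  rcases lt_trichotomy s 0 with h | h | h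
  · rw [if_neg (by omega), if_neg (by omega), if_neg (by omega)]; abel
  · rw [if_pos (by omega), if_neg (by omega), if_pos (by omega)]; abel
  · rw [if_pos (by omega), if_pos (by omega), if_neg (by omega)]; abel

lemma hasSum_sub_shift {f : ℤ → E} {L : E}
    (hf : Summable fun s => f s - if 0 ≤ s then L else 0) (N : ℤ) :
    HasSum (fun s => f s - f (s - N)) (N • L) := by
  have hshift (N : ℤ) : HasSum (fun s => f (s - N) - f (s - N - 1)) L :=
    (Equiv.subRight N).hasSum_iff.2 (hasSum_sub_shift_one hf)
  induction N with
  | zero => simp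
  | succ n ih =>
    rw [add_smul, one_smul]
    refine (ih.add (hshift n)).congr_fun fun s => ?_
    rw [← sub_sub]
    abel
  | pred n ih =>
    rw [sub_smul, one_smul]
    refine (ih.sub (hshift (-n - 1))).congr_fun fun s => ?_
    rw [show s - (-n - 1) - 1 = s - -(n : ℤ) by ring]
    abel

end IntegerSeries

lemma hasSum_mul_mul_add_pow {𝕜 ι κ : Type*} [NormedField 𝕜] [CompleteSpace 𝕜]
    {f u : ι → 𝕜} {g v : κ → 𝕜} {a b : ℕ → 𝕜}
    (hf : ∀ i, Summable fun s => ‖f s * u s ^ i‖) (hg : ∀ i, Summable fun t => ‖g t * v t ^ i‖)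
    (ha : ∀ i, HasSum (fun s => f s * u s ^ i) (a i))
    (hb : ∀ i, HasSum (fun t => g t * v t ^ i) (b i)) (l : ℕ) :
    HasSum (fun q : ι × κ => f q.1 * g q.2 * (u q.1 + v q.2) ^ l) (binomConv a b l) := by
  have hterm (i j : ℕ) : HasSum (fun q : ι × κ => f q.1 * u q.1 ^ i * (g q.2 * v q.2 ^ j))
      (a i * b j) := by
    have hsum := summable_mul_of_summable_norm (hf i) (hg j)
    have hmul := (ha i).mul (hb j) hsum
    exact hmul
  refine (hasSum_sum fun p (_ : p ∈ antidiagonal l) =>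
    (hterm p.1 p.2).mul_left (l.choose p.1 : 𝕜)).congr_fun fun q => ?_
  rw [(Commute.all _ _).add_pow', Finset.mul_sum]
  refine Finset.sum_congr rfl fun p _ => ?_
  rw [nsmul_eq_mul]
  ring

/-! ### Termwise integration -/

lemma integrableOn_pow_mul_exp (p : ℕ) {c : ℝ} (hc : 0 < c) :
    IntegrableOn (fun t : ℝ => t ^ p * Real.exp (-(c * t))) (Set.Ioi 0) := by
  have hp : (-1 : ℝ) < p := by linarith [p.cast_nonneg (α := ℝ)]
  refine (integrableOn_rpow_mul_exp_neg_mul_rpow hp one_pos hc).congr_fun (fun t _ => ?_)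
    measurableSet_Ioi
  simp only [Real.rpow_natCast, Real.rpow_one, neg_mul]

lemma integral_pow_mul_exp (p : ℕ) {c : ℝ} (hc : 0 < c) :
    ∫ t in Set.Ioi (0 : ℝ), t ^ p * Real.exp (-(c * t)) = p ! / c ^ (p + 1) := by
  have h := Real.integral_rpow_mul_exp_neg_mul_Ioi (a := p + 1) (r := c) (by positivity) hc
  simp only [add_sub_cancel_right, Real.rpow_natCast] at h
  rw [h, Real.Gamma_nat_eq_factorial, ← Nat.cast_succ, Real.rpow_natCast, one_div_pow,
    one_div_mul_eq_div]

lemma norm_pow_mul_cexp (p : ℕ) (c : ℂ) {t : ℝ} (ht : 0 < t) :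
    ‖(t : ℂ) ^ p * Complex.exp (-(c * t))‖ = t ^ p * Real.exp (-(c.re * t)) := by
  rw [norm_mul, norm_pow, Complex.norm_real, Complex.norm_exp, Real.norm_of_nonneg ht.le,
    Complex.neg_re, Complex.re_mul_ofReal]

lemma integrableOn_pow_mul_cexp (p : ℕ) {c : ℂ} (hc : 0 < c.re) :
    IntegrableOn (fun t : ℝ => (t : ℂ) ^ p * Complex.exp (-(c * t))) (Set.Ioi 0) := by
  refine Integrable.mono' (integrableOn_pow_mul_exp p hc)
    (by fun_prop : Continuous _).aestronglyMeasurable ?_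
  filter_upwards [ae_restrict_mem measurableSet_Ioi] with t ht using (norm_pow_mul_cexp p c ht).le

lemma tendsto_pow_mul_cexp (p : ℕ) {c : ℂ} (hc : 0 < c.re) :
    Tendsto (fun t : ℝ => (t : ℂ) ^ p * Complex.exp (-(c * t))) atTop (𝓝 0) := by
  rw [tendsto_zero_iff_norm_tendsto_zero]
  refine (tendsto_rpow_mul_exp_neg_mul_atTop_nhds_zero p c.re hc).congr' ?_
  filter_upwards [eventually_gt_atTop 0] with t ht
  rw [norm_pow_mul_cexp p c ht, Real.rpow_natCast, neg_mul]

lemma hasDerivAt_neg_cexp_div {c : ℂ} (hc : c ≠ 0) (t : ℝ) :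
    HasDerivAt (fun t : ℝ => -Complex.exp (-(c * t)) / c) (Complex.exp (-(c * t))) t := by
  have hlin := ((Complex.ofRealCLM.hasDerivAt (x := t)).const_mul c).neg
  refine (hlin.cexp.neg.div_const c).congr_deriv ?_
  simp only [Pi.neg_apply, Complex.ofRealCLM_apply, Complex.ofReal_one]
  field_simp

lemma integral_pow_succ_mul_cexp (p : ℕ) {c : ℂ} (hc : 0 < c.re) :
    ∫ t in Set.Ioi (0 : ℝ), (t : ℂ) ^ (p + 1) * Complex.exp (-(c * t)) =
      (p + 1) / c * ∫ t in Set.Ioi (0 : ℝ), (t : ℂ) ^ p * Complex.exp (-(c * t)) := by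
  have hc0 : c ≠ 0 := by rintro rfl; simp at hc
  have hpow (t : ℝ) :
      HasDerivAt (fun t : ℝ => (t : ℂ) ^ (p + 1)) ((p + 1 : ℂ) * (t : ℂ) ^ p) t := by
    simpa using (hasDerivAt_pow (p + 1) (t : ℂ)).comp_ofReal
  have huv : (fun t : ℝ => (t : ℂ) ^ (p + 1)) * (fun t : ℝ => -Complex.exp (-(c * t)) / c) =
      fun t : ℝ => -c⁻¹ * ((t : ℂ) ^ (p + 1) * Complex.exp (-(c * t))) := by
    funext t
    simp only [Pi.mul_apply]
    ring
  have hu'v : (fun t : ℝ => (p + 1 : ℂ) * (t : ℂ) ^ p) *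
      (fun t : ℝ => -Complex.exp (-(c * t)) / c) =
      fun t : ℝ => -(p + 1) / c * ((t : ℂ) ^ p * Complex.exp (-(c * t))) := by
    funext t
    simp only [Pi.mul_apply]
    ring
  have hparts := integral_Ioi_mul_deriv_eq_deriv_mul (a := 0) (a' := 0) (b' := 0)
    (fun t _ => hpow t) (fun t _ => hasDerivAt_neg_cexp_div hc0 t)
    (integrableOn_pow_mul_cexp (p + 1) hc) (hu'v ▸ (integrableOn_pow_mul_cexp p hc).const_mul _)
    (huv ▸ ((by fun_prop : Continuous _).tendsto' _ _ (by simp)).mono_left nhdsWithin_le_nhds)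
    (by simpa only [huv, mul_zero] using (tendsto_pow_mul_cexp (p + 1) hc).const_mul (-c⁻¹))
  have hint := congrArg (fun f : ℝ → ℂ => ∫ t in Set.Ioi (0 : ℝ), f t) hu'v
  simp only [Pi.mul_apply] at hint
  rw [hparts, hint, integral_const_mul]
  ring

lemma integral_pow_mul_cexp (p : ℕ) {c : ℂ} (hc : 0 < c.re) :
    ∫ t in Set.Ioi (0 : ℝ), (t : ℂ) ^ p * Complex.exp (-(c * t)) = p ! / c ^ (p + 1) := by
  have hc0 : c ≠ 0 := by rintro rfl; simp at hc
  induction p with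
  | zero =>
    simpa [neg_mul, neg_div] using integral_exp_mul_complex_Ioi (a := -c) (by simpa) 0
  | succ p ih =>
    rw [integral_pow_succ_mul_cexp p hc, ih, Nat.factorial_succ]
    push_cast
    field_simp
    ring

/-- The function `2 sinh z` for `ε = 1` and `2 cosh z` for `ε = -1`. -/
noncomputable def twistedSinh (ε z : ℂ) : ℂ :=
  Complex.exp z - ε * Complex.exp (-z)

lemma two_mul_re_mul_le_norm_twistedSinh {ε β : ℂ} (hε : ‖ε‖ ≤ 1) (hβ : 0 < β.re) {t : ℝ}
    (ht : 0 < t) : 2 * (β.re * t) ≤ ‖twistedSinh ε (β * t)‖ := by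
  have hsinh : 2 * (β.re * t) ≤ Real.exp (β.re * t) - Real.exp (-(β.re * t)) := by
    have h := Real.self_le_sinh_iff.2 (mul_pos hβ ht).le
    rw [Real.sinh_eq] at h
    linarith
  have hnorm := norm_sub_norm_le (Complex.exp (β * t)) (ε * Complex.exp (-(β * t)))
  rw [norm_mul, Complex.norm_exp, Complex.norm_exp, Complex.neg_re, Complex.re_mul_ofReal] at hnorm
  have hle := mul_le_of_le_one_left (Real.exp_pos (-(β.re * t))).le hε
  rw [twistedSinh]
  linarith

lemma exists_norm_inv_twistedSinh_le {ε β : ℂ} (hε : ‖ε‖ ≤ 1) (hε1 : ε ≠ 1) (hβ : 0 < β.re) :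
    ∃ C : ℝ, ∀ t : ℝ, 0 < t → ‖(twistedSinh ε (β * t))⁻¹‖ ≤ C := by
  have hne : ∀ t ∈ Set.Icc (0 : ℝ) 1, twistedSinh ε (β * t) ≠ 0 := by
    rintro t ⟨ht, -⟩
    rcases ht.eq_or_lt with rfl | ht
    · simpa [twistedSinh, sub_eq_zero] using hε1.symm
    · refine norm_pos_iff.1 (lt_of_lt_of_le ?_ (two_mul_re_mul_le_norm_twistedSinh hε hβ ht))
      positivity
  have hcont : ContinuousOn (fun t : ℝ => (twistedSinh ε (β * t))⁻¹) (Set.Icc 0 1) := by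
    unfold twistedSinh at hne ⊢
    exact ContinuousOn.inv₀ (by fun_prop) hne
  obtain ⟨C, hC⟩ := isCompact_Icc.exists_bound_of_continuousOn hcont
  refine ⟨max C (2 * β.re)⁻¹, fun t ht => ?_⟩
  rcases le_total t 1 with ht1 | ht1
  · exact (hC t ⟨ht.le, ht1⟩).trans (le_max_left _ _)
  · refine le_trans ?_ (le_max_right _ _)
    rw [norm_inv]
    refine inv_anti₀ (by positivity) (le_trans ?_ (two_mul_re_mul_le_norm_twistedSinh hε hβ ht))
    gcongr
    exact le_mul_of_one_le_right hβ.le ht1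

/-- For `ε = 1` the pole of `(twistedSinh ε)⁻¹` at `0` costs one power of `t`. -/
lemma exists_norm_pow_div_twistedSinh_le {ε β : ℂ} (hε : ‖ε‖ ≤ 1) (hβ : 0 < β.re) {p : ℕ}
    (hp : 1 ≤ p) (hp1 : ε = 1 → 2 ≤ p) :
    ∃ (C : ℝ) (q : ℕ), 1 ≤ q ∧ ∀ t : ℝ, 0 < t →
      ‖(t : ℂ) ^ p / twistedSinh ε (β * t)‖ ≤ C * t ^ q := by
  by_cases hε1 : ε = 1
  · obtain ⟨q, rfl⟩ : ∃ q, p = q + 1 := ⟨p - 1, by omega⟩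
    refine ⟨(2 * β.re)⁻¹, q, by have := hp1 hε1; omega, fun t ht => ?_⟩
    have hle := two_mul_re_mul_le_norm_twistedSinh hε hβ ht
    rw [norm_div, norm_pow, Complex.norm_real, Real.norm_of_nonneg ht.le]
    calc t ^ (q + 1) / ‖twistedSinh ε (β * t)‖ ≤ t ^ (q + 1) / (2 * (β.re * t)) := by gcongr
      _ = (2 * β.re)⁻¹ * t ^ q := by rw [pow_succ]; field_simp
  · obtain ⟨C, hC⟩ := exists_norm_inv_twistedSinh_le hε hε1 hβ
    refine ⟨C, p, hp, fun t ht => ?_⟩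
    rw [div_eq_inv_mul, norm_mul, norm_pow, Complex.norm_real, Real.norm_of_nonneg ht.le]
    gcongr
    exact hC t ht

lemma hasSum_inv_twistedSinh {ε α : ℂ} (hε : ‖ε‖ ≤ 1) (hα : 0 < α.re) {t : ℝ} (ht : 0 < t) :
    HasSum (fun n : ℕ => ε ^ n * Complex.exp (-((2 * n + 1) * α * t)))
      (twistedSinh ε (α * t))⁻¹ := by
  have hratio : ‖ε * Complex.exp (-(2 * (α * t)))‖ < 1 := by
    have hexp : ‖Complex.exp (-(2 * (α * t)))‖ < 1 := by
      rw [Complex.norm_exp, Real.exp_lt_one_iff]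
      simpa using mul_pos hα ht
    rw [norm_mul]
    exact mul_lt_one_of_nonneg_of_lt_one_right hε (norm_nonneg _) hexp
  have hfactor : twistedSinh ε (α * t) =
      Complex.exp (α * t) * (1 - ε * Complex.exp (-(2 * (α * t)))) := by
    rw [twistedSinh, mul_sub, mul_one, mul_left_comm, ← Complex.exp_add]
    ring_nf
  rw [hfactor, mul_inv, ← Complex.exp_neg]
  refine ((hasSum_geometric_of_norm_lt_one hratio).mul_left _).congr_fun fun n => ?_
  rw [mul_pow, ← Complex.exp_nat_mul, mul_left_comm, ← Complex.exp_add]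
  ring_nf

lemma summable_inv_odd_mul_pow (c : ℝ) {q : ℕ} (hq : 1 ≤ q) :
    Summable fun n : ℕ => 1 / ((2 * n + 1) * c) ^ (q + 1) := by
  have hinj : Function.Injective fun n : ℕ => 2 * n + 1 := fun m n h => by simpa using h
  have hsum := (Real.summable_one_div_nat_pow.2 (Nat.lt_add_of_pos_left hq : 1 < q + 1))
  refine ((hsum.comp_injective hinj).mul_left (1 / c ^ (q + 1))).congr fun n => ?_
  simp only [Function.comp_apply]
  rw [one_div_mul_one_div, ← mul_pow, mul_comm c]
  push_cast
  rfl

lemma hasSum_integral_div_twistedSinh {ε α : ℂ} (hε : ‖ε‖ ≤ 1) (hα : 0 < α.re) {g : ℝ → ℂ}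
    (hg : AEStronglyMeasurable g (volume.restrict (Set.Ioi 0))) {C : ℝ} {q : ℕ} (hq : 1 ≤ q)
    (hgC : ∀ t : ℝ, 0 < t → ‖g t‖ ≤ C * t ^ q) :
    HasSum (fun n : ℕ => ε ^ n *
        ∫ t in Set.Ioi (0 : ℝ), g t * Complex.exp (-((2 * n + 1) * α * t)))
      (∫ t in Set.Ioi (0 : ℝ), g t / twistedSinh ε (α * t)) := by
  let F (n : ℕ) (t : ℝ) : ℂ := ε ^ n * (g t * Complex.exp (-((2 * n + 1) * α * t)))
  have hre (n : ℕ) : 0 < (2 * n + 1) * α.re := by positivity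
  have hbound (n : ℕ) (t : ℝ) (ht : 0 < t) :
      ‖F n t‖ ≤ C * (t ^ q * Real.exp (-((2 * n + 1) * α.re * t))) := by
    have hexp : ‖Complex.exp (-((2 * n + 1) * α * t))‖ = Real.exp (-((2 * n + 1) * α.re * t)) := by
      rw [Complex.norm_exp]
      simp
    have hεn := pow_le_one₀ (norm_nonneg ε) hε (n := n)
    rw [norm_mul, norm_mul, norm_pow, hexp, ← mul_assoc C]
    exact (mul_le_of_le_one_left (by positivity) hεn).trans
      (mul_le_mul_of_nonneg_right (hgC t ht) (Real.exp_pos _).le)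
  have hdom (n : ℕ) : IntegrableOn
      (fun t : ℝ => C * (t ^ q * Real.exp (-((2 * n + 1) * α.re * t)))) (Set.Ioi 0) :=
    (integrableOn_pow_mul_exp q (hre n)).const_mul C
  have hint (n : ℕ) : IntegrableOn (F n) (Set.Ioi 0) := by
    refine Integrable.mono' (hdom n) ((hg.mul ?_).const_mul _)
      ((ae_restrict_mem measurableSet_Ioi).mono fun t ht => hbound n t ht)
    exact (by fun_prop : Continuous _).aestronglyMeasurable
  have hsum : Summable fun n => ∫ t in Set.Ioi (0 : ℝ), ‖F n t‖ := by
    refine .of_nonneg_of_le (fun n => integral_nonneg fun t => norm_nonneg _) (fun n => ?_)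
      (((summable_inv_odd_mul_pow α.re hq).mul_left (q ! : ℝ)).mul_left C)
    rw [mul_one_div, ← integral_pow_mul_exp q (hre n), ← integral_const_mul]
    exact setIntegral_mono_on (hint n).norm (hdom n) measurableSet_Ioi (hbound n)
  have h := hasSum_integral_of_summable_integral_norm hint hsum
  have hlim : ∫ t in Set.Ioi (0 : ℝ), ∑' n, F n t =
      ∫ t in Set.Ioi (0 : ℝ), g t / twistedSinh ε (α * t) := by
    refine setIntegral_congr_fun measurableSet_Ioi fun t ht => ?_
    have hgeom := (hasSum_inv_twistedSinh hε hα ht).mul_left (g t)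
    rw [div_eq_mul_inv, ← hgeom.tsum_eq]
    exact tsum_congr fun n => mul_left_comm _ _ _
  rw [hlim] at h
  exact h.congr_fun fun n => (integral_const_mul _ _).symm

/-! ### Lattice sums -/

/-- The general term of the lattice sums over `(2n + 1)α + (2m + 1)β` into which the moment
integrals expand. -/
noncomputable def latticeTerm (ε α β : ℂ) (p : ℕ) (n m : ℤ) : ℂ :=
  ε ^ n * (ε ^ m * (p ! / ((2 * n + 1) * α + (2 * m + 1) * β) ^ (p + 1)))

lemma re_odd_mul_pos {α : ℂ} (hα : 0 < α.re) (n : ℕ) : 0 < ((2 * n + 1) * α).re := by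
  simpa using mul_pos (by positivity : (0 : ℝ) < 2 * n + 1) hα

lemma hasSum_latticeTerm_nat {ε α β : ℂ} (hε : ‖ε‖ ≤ 1) (hα : 0 < α.re) (hβ : 0 < β.re) {p : ℕ}
    (hp : 1 ≤ p) (n : ℕ) :
    HasSum (fun m : ℕ => latticeTerm ε α β p n m)
      (ε ^ n * ∫ t in Set.Ioi (0 : ℝ), (t : ℂ) ^ p / twistedSinh ε (β * t) *
        Complex.exp (-((2 * n + 1) * α * t))) := by
  have hre := re_odd_mul_pos hα n
  have h := hasSum_integral_div_twistedSinh hε hβ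
    (integrableOn_pow_mul_cexp p hre).aestronglyMeasurable hp (C := 1) fun t ht => by
      rw [norm_pow_mul_cexp p _ ht, one_mul]
      exact mul_le_of_le_one_right (by positivity) (Real.exp_le_one_iff.2 (by nlinarith))
  simp only [div_mul_eq_mul_div]
  refine (h.mul_left (ε ^ n)).congr_fun fun m => ?_
  have hre' : 0 < ((2 * n + 1) * α + (2 * m + 1) * β).re := add_pos hre (re_odd_mul_pos hβ m)
  simp only [latticeTerm, zpow_natCast, Int.cast_natCast, mul_assoc, ← Complex.exp_add]
  rw [← integral_pow_mul_cexp p hre']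
  congr! 5 with t
  ring_nf

lemma hasSum_tsum_latticeTerm_nat {ε α β : ℂ} (hε : ‖ε‖ ≤ 1) (hα : 0 < α.re) (hβ : 0 < β.re)
    {p : ℕ} (hp : 1 ≤ p) (hp1 : ε = 1 → 2 ≤ p) :
    HasSum (fun n : ℕ => ∑' m : ℕ, latticeTerm ε α β p n m)
      (∫ t in Set.Ioi (0 : ℝ), (t : ℂ) ^ p / (twistedSinh ε (β * t) * twistedSinh ε (α * t))) := by
  obtain ⟨C, q, hq, hC⟩ := exists_norm_pow_div_twistedSinh_le hε hβ hp hp1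
  have hmeas : Measurable fun t : ℝ => (t : ℂ) ^ p / twistedSinh ε (β * t) := by
    unfold twistedSinh
    fun_prop
  simp only [← div_div, fun n : ℕ => (hasSum_latticeTerm_nat hε hα hβ hp n).tsum_eq]
  exact hasSum_integral_div_twistedSinh hε hα hmeas.aestronglyMeasurable hq hC

lemma latticeTerm_neg_succ {ε : ℂ} (hε : ε ^ 2 = 1) (α β : ℂ) (j : ℕ) (n m : ℤ) :
    latticeTerm ε α β (2 * j + 1) n (-(m + 1)) =
      ε * (-1) ^ (j + 1) * latticeTerm ε (-I * α) (I * β) (2 * j + 1) n m := by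
  have hε0 : ε ≠ 0 := by rintro rfl; norm_num at hε
  have hinv : ε⁻¹ = ε := inv_eq_of_mul_eq_one_right (by rw [← sq, hε])
  have hpow : ε ^ (-(m + 1)) = ε * ε ^ m := by
    rw [zpow_neg, ← inv_zpow, hinv, zpow_add_one₀ hε0, mul_comm]
  have hrot : ((2 * n + 1) * (-I * α) + (2 * m + 1) * (I * β)) ^ (2 * j + 1 + 1) =
      (-1) ^ (j + 1) * ((2 * n + 1) * α + (2 * (-(m + 1) : ℤ) + 1) * β) ^ (2 * j + 1 + 1) := by
    rw [show 2 * j + 1 + 1 = 2 * (j + 1) by ring, pow_mul, pow_mul, ← mul_pow]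
    congr 1
    push_cast
    linear_combination ((2 * n + 1) * α - (2 * m + 1) * β) ^ 2 * Complex.I_sq
  have hsign : ((-1 : ℂ) ^ (j + 1))⁻¹ = (-1) ^ (j + 1) := by rw [← inv_pow, inv_neg_one]
  have hsq : ((-1 : ℂ) ^ (j + 1)) * (-1) ^ (j + 1) = 1 := by rw [← mul_pow]; simp
  rw [latticeTerm, latticeTerm, hpow, hrot, div_eq_mul_inv, div_eq_mul_inv, mul_inv, hsign]
  linear_combination -(ε ^ n * (ε * ε ^ m * ((2 * j + 1)! *
    (((2 * n + 1) * α + (2 * (-(m + 1) : ℤ) + 1) * β) ^ (2 * j + 1 + 1))⁻¹))) * hsq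

lemma hasSum_tsum_latticeTerm {ε α β : ℂ} (hε : ε ^ 2 = 1) (hαre : 0 < α.re) (hαim : 0 < α.im)
    (hβre : 0 < β.re) (hβim : β.im < 0) {j : ℕ} (hj : ε = 1 → 1 ≤ j) :
    HasSum (fun n : ℕ => ∑' m : ℤ, latticeTerm ε α β (2 * j + 1) n m)
      ((∫ t in Set.Ioi (0 : ℝ), (t : ℂ) ^ (2 * j + 1) /
          (twistedSinh ε (β * t) * twistedSinh ε (α * t))) +
        ε * (-1) ^ (j + 1) * ∫ t in Set.Ioi (0 : ℝ), (t : ℂ) ^ (2 * j + 1) /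
          (twistedSinh ε (I * β * t) * twistedSinh ε (-I * α * t))) := by
  have hnorm : ‖ε‖ ≤ 1 := (pow_eq_one_iff_of_nonneg (norm_nonneg ε) two_ne_zero).1
    (by rw [← norm_pow, hε, norm_one]) |>.le
  have hα' : 0 < (-I * α).re := by simpa using hαim
  have hβ' : 0 < (I * β).re := by simpa using hβim
  have hp : 1 ≤ 2 * j + 1 := by omega
  have hp1 (h : ε = 1) : 2 ≤ 2 * j + 1 := by have := hj h; omega
  have h := (hasSum_tsum_latticeTerm_nat hnorm hαre hβre hp hp1).add
    ((hasSum_tsum_latticeTerm_nat hnorm hα' hβ' hp hp1).mul_left (ε * (-1) ^ (j + 1)))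
  refine h.congr_fun fun n => ?_
  have hpos := (hasSum_latticeTerm_nat hnorm hαre hβre hp n).summable
  have hneg := (hasSum_latticeTerm_nat hnorm hα' hβ' hp n).summable
  rw [← tsum_mul_left]
  simp only [← latticeTerm_neg_succ hε]
  refine tsum_of_nat_of_neg_add_one hpos ?_
  simpa only [latticeTerm_neg_succ hε] using hneg.mul_left (ε * (-1) ^ (j + 1))

/-! ### The moment integrals as lattice sums -/

/-- The moment integral `∫₀^∞ x^j dx / (cosh(b√x) - ε cos(a√x))`. -/
noncomputable def coshCosMoment (ε a b : ℝ) (j : ℕ) : ℝ :=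
  ∫ x in Set.Ioi (0 : ℝ), x ^ j / (Real.cosh (b * √x) - ε * Real.cos (a * √x))

/-- The moment integral `∫_ℝ x^j dx / (cosh(b√x) - ε cos(a√x))` for `ε = ±1`, with `√x = i√(-x)` for
`x < 0`, so that `x ↦ -x` exchanges `cosh` and `cos` on the negative half-line. -/
noncomputable def bilateralMoment (ε a b : ℝ) (j : ℕ) : ℝ :=
  coshCosMoment ε a b j - ε * (-1) ^ j * coshCosMoment ε b a j

/-- The complex number `(b + ia) / 2`, through which `cosh(bt) ± cos(at)` factors. -/
noncomputable def halfPeriod (a b : ℝ) : ℂ :=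
  ⟨b / 2, a / 2⟩

lemma I_mul_conj_halfPeriod (a b : ℝ) : I * conj (halfPeriod a b) = halfPeriod b a := by
  apply Complex.ext <;> simp [halfPeriod]

lemma neg_I_mul_halfPeriod (a b : ℝ) : -I * halfPeriod a b = conj (halfPeriod b a) := by
  apply Complex.ext <;> simp [halfPeriod]

lemma twistedSinh_conj_mul_twistedSinh {ε : ℝ} (hε : ε ^ 2 = 1) (a b t : ℝ) :
    twistedSinh ε (conj (halfPeriod a b) * t) * twistedSinh ε (halfPeriod a b * t) =
      2 * ((Real.cosh (b * t) - ε * Real.cos (a * t) : ℝ) : ℂ) := by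
  have hα : halfPeriod a b = (b + a * I) / 2 := by apply Complex.ext <;> simp [halfPeriod]
  have hβ : conj (halfPeriod a b) = (b - a * I) / 2 := by
    apply Complex.ext <;> simp [halfPeriod, neg_div]
  have hε' : (ε : ℂ) ^ 2 = 1 := by exact_mod_cast hε
  rw [hβ, hα, twistedSinh, twistedSinh]
  push_cast
  rw [Complex.cosh, Complex.cos]
  have hsum (u v w : ℂ) (h : u + v = w) : Complex.exp u * Complex.exp v = Complex.exp w := by
    rw [← Complex.exp_add, h]
  linear_combination hsum ((b - a * I) / 2 * t) ((b + a * I) / 2 * t) (b * t) (by ring)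
    - ε * hsum ((b - a * I) / 2 * t) (-((b + a * I) / 2 * t)) (-(a * t) * I) (by ring)
    - ε * hsum (-((b - a * I) / 2 * t)) ((b + a * I) / 2 * t) (a * t * I) (by ring)
    + ε ^ 2 * hsum (-((b - a * I) / 2 * t)) (-((b + a * I) / 2 * t)) (-(b * t)) (by ring)
    + Complex.exp (-(b * t)) * hε'

lemma coshCosMoment_eq {ε : ℝ} (hε : ε ^ 2 = 1) (a b : ℝ) (j : ℕ) :
    (coshCosMoment ε a b j : ℂ) = 4 * ∫ t in Set.Ioi (0 : ℝ), (t : ℂ) ^ (2 * j + 1) /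
      (twistedSinh ε (conj (halfPeriod a b) * t) * twistedSinh ε (halfPeriod a b * t)) := by
  rw [coshCosMoment, ← integral_comp_rpow_Ioi_of_pos (p := 2) two_pos, ← integral_const_mul,
    ← integral_complex_ofReal]
  refine setIntegral_congr_fun measurableSet_Ioi fun t (ht : 0 < t) => ?_
  rw [twistedSinh_conj_mul_twistedSinh hε, Real.rpow_two, Real.sqrt_sq ht.le]
  generalize Real.cosh (b * t) - ε * Real.cos (a * t) = D
  norm_num
  ring

lemma hasSum_bilateralMoment {ε a b : ℝ} (hε : ε ^ 2 = 1) (ha : 0 < a) (hb : 0 < b) {j : ℕ}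
    (hj : ε = 1 → 1 ≤ j) :
    HasSum (fun n : ℕ => ∑' m : ℤ,
        latticeTerm ε (halfPeriod a b) (conj (halfPeriod a b)) (2 * j + 1) n m)
      (bilateralMoment ε a b j / 4) := by
  have h := hasSum_tsum_latticeTerm (ε := ε) (α := halfPeriod a b) (β := conj (halfPeriod a b))
    (by exact_mod_cast hε) (half_pos hb) (half_pos ha) (half_pos hb)
    (neg_lt_zero.2 (half_pos ha)) (j := j) (by simpa using hj)
  convert! h using 1
  rw [I_mul_conj_halfPeriod, neg_I_mul_halfPeriod, bilateralMoment]
  push_cast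
  rw [coshCosMoment_eq hε, coshCosMoment_eq hε]
  simp only [mul_comm (twistedSinh ε (halfPeriod b a * _))]
  ring

/-! ### Lipschitz's formula and Lambert series -/

lemma hasSum_lipschitz {p : ℕ} (hp : 1 ≤ p) {z : ℂ} (hz : 0 < z.im) :
    HasSum (fun m : ℤ => 1 / (z + m) ^ (p + 1)) ((-2 * π * I) ^ (p + 1) / p ! *
      ∑' r : ℕ, (r : ℂ) ^ p * Complex.exp (2 * π * I * z) ^ r) := by
  have h := EisensteinSeries.linear_right_summable z 1 (k := (p + 1 : ℕ)) (by push_cast; omega)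
  rw [← show _ = _ from EisensteinSeries.qExpansion_identity hp ⟨z, hz⟩]
  simpa only [Int.cast_one, one_mul, zpow_natCast, one_div] using h.hasSum

lemma hasSum_lipschitz_arith {p : ℕ} (hp : 1 ≤ p) {z : ℂ} (hz : 0 < z.im) (c : ℝ) {N : ℝ}
    (hN : 0 < N) :
    HasSum (fun m : ℤ => 1 / (z + (N * m + c)) ^ (p + 1)) ((-2 * π * I / N) ^ (p + 1) / p ! *
      ∑' r : ℕ, (r : ℂ) ^ p * Complex.exp (2 * π * I * ((z + c) / N)) ^ r) := by
  have hN' : (N : ℂ) ≠ 0 := Complex.ofReal_ne_zero.2 hN.ne'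
  have h := (hasSum_lipschitz hp (z := (z + c) / N) (by simpa using div_pos hz hN)).mul_left
    (1 / (N : ℂ) ^ (p + 1))
  convert! h using 1
  · funext m
    rw [one_div_mul_one_div, ← mul_pow]
    congr 2
    field_simp
    ring
  · rw [div_pow]
    ring

lemma norm_cexp_pi_mul_I_mul_div_two_lt_one {τ : ℂ} (hτ : 0 < τ.im) :
    ‖Complex.exp (π * I * τ / 2)‖ < 1 := by
  rw [Complex.norm_exp, Real.exp_lt_one_iff]
  have hre : (π * I * τ / 2).re = -(π * τ.im / 2) := by simp [neg_div]
  rw [hre, neg_lt_zero]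
  positivity

lemma cexp_two_pi_mul_I_mul_add_one_div_four (z : ℂ) :
    Complex.exp (2 * π * I * ((z + 1) / 4)) = I * Complex.exp (π * I * z / 2) := by
  rw [show 2 * π * I * ((z + 1) / 4) = π / 2 * I + π * I * z / 2 by ring, Complex.exp_add,
    Complex.exp_pi_div_two_mul_I]

lemma cexp_two_pi_mul_I_mul_add_three_div_four (z : ℂ) :
    Complex.exp (2 * π * I * ((z + 3) / 4)) = -I * Complex.exp (π * I * z / 2) := by
  rw [show 2 * π * I * ((z + 3) / 4) = π * I + (π / 2 * I + π * I * z / 2) by ring,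
    Complex.exp_add, Complex.exp_add, Complex.exp_pi_mul_I, Complex.exp_pi_div_two_mul_I,
    ← mul_assoc, neg_one_mul]

/-- The shifts `2m + 1` split into the residue classes `1` and `3` modulo `4`. -/
lemma hasSum_lipschitz_odd {ε : ℂ} (hε : ε ^ 2 = 1) {p : ℕ} (hp : 1 ≤ p) {z : ℂ} (hz : 0 < z.im) :
    HasSum (fun m : ℤ => ε ^ m * (1 / (z + (2 * m + 1)) ^ (p + 1)))
      ((-π * I / 2) ^ (p + 1) / p ! * ∑' r : ℕ, (r : ℂ) ^ p * (I ^ r + ε * (-I) ^ r) *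
        Complex.exp (π * I * z / 2) ^ r) := by
  set q := Complex.exp (π * I * z / 2)
  have hq : ‖q‖ < 1 := norm_cexp_pi_mul_I_mul_div_two_lt_one hz
  have hε0 : ε ≠ 0 := by rintro rfl; norm_num at hε
  have hsummable (w : ℂ) (hw : ‖w‖ = 1) : Summable fun r : ℕ => (r : ℂ) ^ p * (w * q) ^ r :=
    summable_pow_mul_geometric_of_norm_lt_one p (by rwa [norm_mul, hw, one_mul])
  have hsplit : ∑' r : ℕ, (r : ℂ) ^ p * (I ^ r + ε * (-I) ^ r) * q ^ r =
      ∑' r : ℕ, (r : ℂ) ^ p * (I * q) ^ r + ε * ∑' r : ℕ, (r : ℂ) ^ p * (-I * q) ^ r := by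
    rw [← tsum_mul_left, ← Summable.tsum_add (hsummable I (by simp))
      ((hsummable (-I) (by simp)).mul_left ε)]
    exact tsum_congr fun r => by rw [mul_pow, mul_pow]; ring
  have hclass1 := hasSum_lipschitz_arith hp hz 1 (N := 4) (by norm_num)
  have hclass3 := (hasSum_lipschitz_arith hp hz 3 (N := 4) (by norm_num)).mul_left ε
  rw [Complex.ofReal_one, Complex.ofReal_ofNat, cexp_two_pi_mul_I_mul_add_one_div_four] at hclass1
  rw [Complex.ofReal_ofNat, Complex.ofReal_ofNat, cexp_two_pi_mul_I_mul_add_three_div_four]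
    at hclass3
  convert! hasSum_int_even_add_odd (hclass1.congr_fun fun k => ?_)
    (hclass3.congr_fun fun k => ?_) using 1
  · rw [hsplit]
    ring
  · rw [zpow_mul, zpow_ofNat, hε, one_zpow]
    push_cast
    ring_nf
  · rw [zpow_add_one₀ hε0, zpow_mul, zpow_ofNat, hε, one_zpow]
    push_cast
    ring_nf

/-- The Lambert-type series `∑ᵣ cᵣ yʳ / (1 - ε y²ʳ)` with coefficients
`cᵣ = rᵖ (iʳ + ε (-i)ʳ)`. -/
noncomputable def lambertSeries (ε y : ℂ) (p : ℕ) : ℂ :=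
  ∑' r : ℕ, (r : ℂ) ^ p * (I ^ r + ε * (-I) ^ r) * (y ^ r / (1 - ε * y ^ (2 * r)))

lemma tsum_pow_mul_tsum_mul_pow {y ε : ℂ} (hy : ‖y‖ < 1) (hε : ‖ε‖ ≤ 1) {c : ℕ → ℂ}
    (hc0 : c 0 = 0) (hc : Summable fun r => ‖c r * y ^ r‖) :
    ∑' n : ℕ, ε ^ n * ∑' r : ℕ, c r * (y ^ (2 * n + 1)) ^ r =
      ∑' r : ℕ, c r * (y ^ r / (1 - ε * y ^ (2 * r))) := by
  have hgeom : Summable fun n : ℕ => ‖y‖ ^ n := summable_geometric_of_lt_one (norm_nonneg y) hy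
  have hsum : Summable (Function.uncurry fun n r : ℕ => ε ^ n * (c r * (y ^ (2 * n + 1)) ^ r)) := by
    have hprod := hgeom.mul_of_nonneg hc (fun n => by positivity) fun r => norm_nonneg _
    refine hprod.of_norm_bounded ?_
    rintro ⟨n, r⟩
    rcases Nat.eq_zero_or_pos r with rfl | hr
    · simp [hc0]
    · have hexp : ‖y‖ ^ ((2 * n + 1) * r) ≤ ‖y‖ ^ (n + r) :=
        pow_le_pow_of_le_one (norm_nonneg y) hy.le (by nlinarith)
      calc ‖ε ^ n * (c r * (y ^ (2 * n + 1)) ^ r)‖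
          = ‖ε‖ ^ n * (‖c r‖ * ‖y‖ ^ ((2 * n + 1) * r)) := by
            rw [← pow_mul, norm_mul, norm_mul, norm_pow, norm_pow]
        _ ≤ 1 * (‖c r‖ * ‖y‖ ^ (n + r)) := by
            gcongr
            exact pow_le_one₀ (norm_nonneg ε) hε
        _ = ‖y‖ ^ n * ‖c r * y ^ r‖ := by rw [norm_mul, norm_pow, pow_add]; ring
  simp only [← tsum_mul_left]
  rw [← hsum.tsum_comm]
  refine tsum_congr fun r => ?_
  rcases Nat.eq_zero_or_pos r with rfl | hr
  · simp [hc0]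
  · have hratio : ‖ε * y ^ (2 * r)‖ < 1 := by
      rw [norm_mul, norm_pow]
      exact mul_lt_one_of_nonneg_of_lt_one_right hε (by positivity)
        (pow_lt_one₀ (norm_nonneg y) hy (by omega))
    rw [div_eq_mul_inv, ← tsum_geometric_of_norm_lt_one hratio, ← mul_assoc, ← tsum_mul_left]
    refine tsum_congr fun n => ?_
    rw [mul_pow, ← pow_mul, ← pow_mul, show (2 * n + 1) * r = r + 2 * r * n by ring, pow_add]
    ring

lemma tsum_latticeTerm {ε α β : ℂ} (hε : ε ^ 2 = 1) (hβ : β ≠ 0) (hτ : 0 < (α / β).im) {p : ℕ}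
    (hp : 1 ≤ p) (n : ℕ) :
    ∑' m : ℤ, latticeTerm ε α β p n m = (-π * I / (2 * β)) ^ (p + 1) *
      (ε ^ n * ∑' r : ℕ, (r : ℂ) ^ p * (I ^ r + ε * (-I) ^ r) *
        (Complex.exp (π * I * (α / β) / 2) ^ (2 * n + 1)) ^ r) := by
  have hp0 : (p ! : ℂ) ≠ 0 := Nat.cast_ne_zero.2 p.factorial_ne_zero
  have hz : 0 < ((2 * n + 1) * (α / β)).im := by
    rw [show (2 * n + 1 : ℂ) = ((2 * n + 1 : ℝ) : ℂ) by push_cast; ring, Complex.im_ofReal_mul]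
    positivity
  have hterm (m : ℤ) : latticeTerm ε α β p n m = ε ^ n * (p ! / β ^ (p + 1)) *
      (ε ^ m * (1 / ((2 * n + 1) * (α / β) + (2 * m + 1)) ^ (p + 1))) := by
    have hden : (2 * n + 1) * α + (2 * m + 1) * β =
        β * ((2 * n + 1) * (α / β) + (2 * m + 1)) := by
      field_simp
    rw [latticeTerm, Int.cast_natCast, zpow_natCast, hden, mul_pow, div_mul_eq_div_div]
    ring
  have hexp : Complex.exp (π * I * ((2 * n + 1) * (α / β)) / 2) =
      Complex.exp (π * I * (α / β) / 2) ^ (2 * n + 1) := by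
    rw [← Complex.exp_nat_mul]
    push_cast
    ring_nf
  rw [tsum_congr hterm, tsum_mul_left, (hasSum_lipschitz_odd hε hp hz).tsum_eq, hexp,
    ← div_div (-π * I) 2 β, div_pow _ β]
  field_simp

lemma tsum_tsum_latticeTerm {ε α β : ℂ} (hε : ε ^ 2 = 1) (hβ : β ≠ 0) (hτ : 0 < (α / β).im)
    {p : ℕ} (hp : 1 ≤ p) :
    ∑' n : ℕ, ∑' m : ℤ, latticeTerm ε α β p n m = (-π * I / (2 * β)) ^ (p + 1) *
      lambertSeries ε (Complex.exp (π * I * (α / β) / 2)) p := by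
  have hnorm : ‖ε‖ = 1 := (pow_eq_one_iff_of_nonneg (norm_nonneg ε) two_ne_zero).1
    (by rw [← norm_pow, hε, norm_one])
  have hy := norm_cexp_pi_mul_I_mul_div_two_lt_one hτ
  simp only [tsum_latticeTerm hε hβ hτ hp, tsum_mul_left]
  rw [tsum_pow_mul_tsum_mul_pow hy hnorm.le (by simp; omega), lambertSeries]
  have hsum := (summable_norm_pow_mul_geometric_of_norm_lt_one p hy).mul_left 2
  refine hsum.of_nonneg_of_le (fun _ => norm_nonneg _) fun r => ?_
  have hcoeff : ‖I ^ r + ε * (-I) ^ r‖ ≤ 2 := by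
    refine (norm_add_le _ _).trans_eq ?_
    simp [hnorm, one_add_one_eq_two]
  rw [mul_right_comm, norm_mul, mul_comm]
  gcongr

/-! ### The odd coefficients and their self-convolution -/

/-- The coefficient `(-1)ˢ / (yʳ + y⁻ʳ)` attached to the odd integer `r = 2s + 1`. -/
noncomputable def oddCoeff (y : ℂ) (s : ℤ) : ℂ :=
  (-1) ^ s * (y ^ (2 * s + 1) + (y ^ (2 * s + 1))⁻¹)⁻¹

/-- The `i`-th moment `∑ᵣ rⁱ · oddCoeff` over the odd integers `r = 2s + 1`. -/
noncomputable def oddMoment (y : ℂ) (i : ℕ) : ℂ :=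
  ∑' s : ℤ, oddCoeff y s * (2 * s + 1) ^ i

/-- The coefficient attached to the even integer `2N` in the self-convolution of `oddCoeff`, for
`N ≠ 0`. At `N = 0` the formula reads `0 / 0 = 0`, which is not the value of the convolution; the
moments of positive order do not see it. -/
noncomputable def evenCoeff (y : ℂ) (N : ℤ) : ℂ :=
  (-1) ^ (N - 1) * N / ((y ^ (2 * N))⁻¹ - y ^ (2 * N))

/-- A function on `ℤ` going from `0` at `-∞` to `1` at `+∞`, in terms of which the products
`oddCoeff y s * oddCoeff y (N - 1 - s)` telescope. -/
noncomputable def stepFn (y : ℂ) (s : ℤ) : ℂ :=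
  (1 + (y ^ (2 * s + 1)) ^ 2)⁻¹

lemma inv_add_inv_mul_inv_add_inv {K : Type*} [Field K] {u v : K} (hu : u ≠ 0)
    (hv : v ≠ 0) (hv1 : v ^ 2 ≠ 1) (hu1 : 1 + u ^ 2 ≠ 0) (huv : 1 + (u / v) ^ 2 ≠ 0) :
    (u + u⁻¹)⁻¹ * (v / u + (v / u)⁻¹)⁻¹ =
      ((1 + u ^ 2)⁻¹ - (1 + (u / v) ^ 2)⁻¹) / (v⁻¹ - v) := by
  have hsq : v ^ 2 + u ^ 2 ≠ 0 := by
    contrapose huv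
    rw [div_pow, one_add_div (pow_ne_zero 2 hv), huv, zero_div]
  have hsub : 1 - v ^ 2 ≠ 0 := sub_ne_zero.2 hv1.symm
  rw [show u + u⁻¹ = (1 + u ^ 2) / u by field_simp; ring,
    show v / u + (v / u)⁻¹ = (v ^ 2 + u ^ 2) / (u * v) by field_simp,
    show v⁻¹ - v = (1 - v ^ 2) / v by field_simp,
    show 1 + (u / v) ^ 2 = (v ^ 2 + u ^ 2) / v ^ 2 by field_simp]
  field_simp
  ring

section OddCoefficients

variable {y : ℂ}

lemma zpow_ne_of_norm_lt_one (hy : ‖y‖ < 1) {k : ℤ} (hk : k ≠ 0) {ζ : ℂ} (hζ : ‖ζ‖ = 1) :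
    y ^ k ≠ ζ := by
  rintro rfl
  rw [norm_zpow] at hζ
  exact hk ((zpow_eq_one_iff_right₀ (norm_nonneg _) hy.ne).1 hζ)

lemma one_add_sq_zpow_ne_zero (hy : ‖y‖ < 1) (s : ℤ) : 1 + (y ^ (2 * s + 1)) ^ 2 ≠ 0 := by
  have hne := zpow_ne_of_norm_lt_one hy (k := (2 * s + 1) * 2) (ζ := -1) (by omega) (by simp)
  rw [zpow_mul, zpow_ofNat] at hne
  exact fun h => hne (eq_neg_of_add_eq_zero_right h)

lemma one_sub_norm_le_norm_one_add_pow (hy : ‖y‖ ≤ 1) {k : ℕ} (hk : k ≠ 0) :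
    1 - ‖y‖ ≤ ‖1 + y ^ k‖ := by
  have hsub := norm_sub_norm_le (1 : ℂ) (-y ^ k)
  rw [norm_neg, norm_pow, norm_one, sub_neg_eq_add] at hsub
  have hpow := pow_le_of_le_one (norm_nonneg y) hy hk
  linarith

lemma norm_pow_div_one_add_pow_le (hy : ‖y‖ < 1) (m : ℕ) {k : ℕ} (hk : k ≠ 0) :
    ‖y ^ m / (1 + y ^ k)‖ ≤ (1 - ‖y‖)⁻¹ * ‖y‖ ^ m := by
  rw [norm_div, norm_pow, div_eq_inv_mul]
  exact mul_le_mul_of_nonneg_right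
    (inv_anti₀ (sub_pos.2 hy) (one_sub_norm_le_norm_one_add_pow hy.le hk)) (by positivity)

lemma oddCoeff_neg_succ (y : ℂ) (s : ℤ) : oddCoeff y (-(s + 1)) = -oddCoeff y s := by
  rw [oddCoeff, oddCoeff, show 2 * -(s + 1) + 1 = -(2 * s + 1) by ring, zpow_neg, zpow_neg, inv_inv,
    add_comm (y ^ (2 * s + 1))⁻¹, zpow_add_one₀ (by norm_num), mul_neg_one, inv_neg, ← inv_zpow,
    inv_neg_one, neg_mul]

lemma oddCoeff_mul_pow_neg_succ (y : ℂ) (s : ℤ) (i : ℕ) :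
    oddCoeff y (-(s + 1)) * (2 * (-(s + 1) : ℤ) + 1) ^ i =
      -(-1) ^ i * (oddCoeff y s * (2 * s + 1) ^ i) := by
  have hbase : 2 * ((-(s + 1) : ℤ) : ℂ) + 1 = -1 * (2 * s + 1) := by push_cast; ring
  rw [oddCoeff_neg_succ, hbase, mul_pow]
  ring

lemma oddCoeff_natCast (y : ℂ) (s : ℕ) :
    oddCoeff y s = (-1) ^ s * (y ^ (2 * s + 1) / (1 + y ^ (2 * (2 * s + 1)))) := by
  rw [oddCoeff, zpow_natCast, mul_comm 2 (2 * s + 1), pow_mul,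
    show (2 * (s : ℤ) + 1) = ((2 * s + 1 : ℕ) : ℤ) by push_cast; rfl, zpow_natCast]
  congr 1
  rcases eq_or_ne (y ^ (2 * s + 1)) 0 with h | h
  · simp [h]
  · field_simp
    ring

lemma summable_norm_oddCoeff_mul_pow (hy : ‖y‖ < 1) (i : ℕ) :
    Summable fun s : ℤ => ‖oddCoeff y s * (2 * s + 1) ^ i‖ := by
  have hnat : Summable fun s : ℕ => ‖oddCoeff y s * (2 * (s : ℤ) + 1) ^ i‖ := by
    have hgeom := (summable_norm_pow_mul_geometric_of_norm_lt_one i hy).comp_injective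
      (i := fun s : ℕ => 2 * s + 1) fun a b h => by simpa using h
    refine (hgeom.mul_left (1 - ‖y‖)⁻¹).of_nonneg_of_le (fun _ => norm_nonneg _) fun s => ?_
    have hbound := norm_pow_div_one_add_pow_le hy (2 * s + 1) (k := 2 * (2 * s + 1)) (by omega)
    rw [oddCoeff_natCast, norm_mul, norm_mul, norm_pow, norm_neg, norm_one, one_pow, one_mul,
      Function.comp_apply, norm_mul, norm_pow y, mul_comm ‖((2 * s + 1 : ℕ) : ℂ) ^ i‖, ← mul_assoc]
    push_cast
    gcongr
  refine Summable.of_nat_of_neg_add_one hnat (hnat.congr fun s => ?_)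
  rw [oddCoeff_mul_pow_neg_succ, norm_mul]
  simp

lemma hasSum_oddMoment (hy : ‖y‖ < 1) (i : ℕ) :
    HasSum (fun s : ℤ => oddCoeff y s * (2 * s + 1) ^ i) (oddMoment y i) :=
  (summable_norm_oddCoeff_mul_pow hy i).of_norm.hasSum

lemma oddMoment_of_even (y : ℂ) {i : ℕ} (hi : Even i) : oddMoment y i = 0 := by
  have h := ((Equiv.neg ℤ).trans (Equiv.subRight (1 : ℤ))).tsum_eq
    fun s : ℤ => oddCoeff y s * (2 * s + 1) ^ i
  simp only [Equiv.trans_apply, Equiv.neg_apply, Equiv.subRight_apply, ← neg_add',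
    oddCoeff_mul_pow_neg_succ, hi.neg_one_pow, neg_one_mul, tsum_neg] at h
  exact self_eq_neg.1 h.symm

lemma stepFn_neg_succ (hy0 : y ≠ 0) (hy : ‖y‖ < 1) (s : ℤ) :
    stepFn y (-(s + 1)) = 1 - stepFn y s := by
  have hne := one_add_sq_zpow_ne_zero hy s
  have hu : y ^ (2 * s + 1) ≠ 0 := zpow_ne_zero _ hy0
  rw [stepFn, stepFn, show 2 * -(s + 1) + 1 = -(2 * s + 1) by ring, zpow_neg]
  generalize y ^ (2 * s + 1) = u at hne hu
  rw [show 1 + u⁻¹ ^ 2 = (1 + u ^ 2) / u ^ 2 by field_simp; ring]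
  field_simp
  ring

lemma summable_stepFn_sub_ite (hy0 : y ≠ 0) (hy : ‖y‖ < 1) :
    Summable fun s : ℤ => stepFn y s - if 0 ≤ s then 1 else 0 := by
  have hnat : Summable fun s : ℕ => stepFn y s - 1 := by
    have hgeom := (summable_geometric_of_lt_one (norm_nonneg y) hy).comp_injective
      (i := fun s : ℕ => 2 * (2 * s + 1)) fun a b h => by simpa using h
    refine (hgeom.mul_left (1 - ‖y‖)⁻¹).of_norm_bounded fun s => ?_
    have hne := one_add_sq_zpow_ne_zero hy s
    have hstep : stepFn y s - 1 = -(y ^ (2 * (2 * s + 1)) / (1 + y ^ (2 * (2 * s + 1)))) := by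
      rw [show (2 * (s : ℤ) + 1) = ((2 * s + 1 : ℕ) : ℤ) by push_cast; rfl, zpow_natCast] at hne
      rw [stepFn, show (2 * (s : ℤ) + 1) = ((2 * s + 1 : ℕ) : ℤ) by push_cast; rfl, zpow_natCast,
        mul_comm 2 (2 * s + 1), pow_mul]
      field_simp
      ring
    rw [hstep, norm_neg]
    exact norm_pow_div_one_add_pow_le hy _ (by omega)
  refine Summable.of_nat_of_neg_add_one (by simpa using hnat) (hnat.neg.congr fun s => ?_)
  rw [stepFn_neg_succ hy0 hy, if_neg (by omega)]
  ring

lemma hasSum_oddCoeff_mul_oddCoeff (hy0 : y ≠ 0) (hy : ‖y‖ < 1) {N : ℤ} (hN : N ≠ 0) :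
    HasSum (fun s : ℤ => oddCoeff y s * oddCoeff y (N - 1 - s)) (evenCoeff y N) := by
  have h := (hasSum_sub_shift (summable_stepFn_sub_ite hy0 hy) N).mul_left
    ((-1) ^ (N - 1) / ((y ^ (2 * N))⁻¹ - y ^ (2 * N)))
  rw [zsmul_one, div_mul_eq_mul_div] at h
  refine h.congr_fun fun s => ?_
  have hsign : (-1 : ℂ) ^ (N - 1) = (-1) ^ s * (-1) ^ (N - 1 - s) := by
    rw [← zpow_add₀ (by norm_num), add_sub_cancel]
  have hv : y ^ (2 * (N - 1 - s) + 1) = y ^ (2 * N) / y ^ (2 * s + 1) := by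
    rw [← zpow_sub₀ hy0]; ring_nf
  have hw : y ^ (2 * (s - N) + 1) = y ^ (2 * s + 1) / y ^ (2 * N) := by
    rw [← zpow_sub₀ hy0]; ring_nf
  have hv1 : (y ^ (2 * N)) ^ 2 ≠ 1 := by
    rw [← zpow_ofNat, ← zpow_mul]
    exact zpow_ne_of_norm_lt_one hy (by omega) norm_one
  have hw1 := one_add_sq_zpow_ne_zero hy (s - N)
  rw [hw] at hw1
  rw [oddCoeff, oddCoeff, stepFn, stepFn, hv, hw, hsign, mul_mul_mul_comm,
    inv_add_inv_mul_inv_add_inv (zpow_ne_zero _ hy0) (zpow_ne_zero _ hy0) hv1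
      (one_add_sq_zpow_ne_zero hy s) hw1]
  ring

/-- The double sum over pairs of odd integers `2s + 1`, `2t + 1` is taken along the lines
`s + t + 1 = N`. -/
lemma hasSum_evenCoeff_mul_pow (hy0 : y ≠ 0) (hy : ‖y‖ < 1) {l : ℕ} (hl : l ≠ 0) :
    HasSum (fun N : ℤ => evenCoeff y N * (2 * N) ^ l)
      (binomConv (oddMoment y) (oddMoment y) l) := by
  let lines : ℤ × ℤ ≃ ℤ × ℤ :=
    { toFun := fun q => (q.2, q.1 - 1 - q.2)
      invFun := fun q => (q.1 + q.2 + 1, q.1)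
      left_inv := fun q => by ext <;> simp
      right_inv := fun q => by ext <;> simp }
  have hsummable := summable_norm_oddCoeff_mul_pow hy
  have hprod := hasSum_mul_mul_add_pow hsummable hsummable (hasSum_oddMoment hy)
    (hasSum_oddMoment hy) l
  refine (lines.hasSum_iff.2 hprod).prod_fiberwise fun N => ?_
  have hline (s : ℤ) : (2 * (s : ℂ) + 1) + (2 * ((N - 1 - s : ℤ) : ℂ) + 1) = 2 * N := by
    push_cast
    ring
  simp only [Function.comp_apply, lines, Equiv.coe_fn_mk, hline]
  rcases eq_or_ne N 0 with rfl | hN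
  · simp [hl]
  · exact (hasSum_oddCoeff_mul_oddCoeff hy0 hy hN).mul_right _

lemma evenCoeff_neg (y : ℂ) (N : ℤ) : evenCoeff y (-N) = evenCoeff y N := by
  have hsign : (-1 : ℂ) ^ (-N - 1) = (-1) ^ (N - 1) := by
    rw [← neg_add', zpow_neg, ← inv_zpow, inv_neg_one, zpow_add_one₀ (by norm_num),
      zpow_sub_one₀ (by norm_num), inv_neg_one]
  rw [evenCoeff, evenCoeff, hsign, mul_neg 2 N, zpow_neg, inv_inv,
    ← neg_sub (y ^ (2 * N))⁻¹, div_neg]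
  push_cast
  ring

lemma evenCoeff_natCast (hy0 : y ≠ 0) (N : ℕ) :
    evenCoeff y N = -((-1) ^ N * N * (y ^ (2 * N) / (1 - y ^ (2 * (2 * N))))) := by
  have hu : y ^ (2 * N) ≠ 0 := pow_ne_zero _ hy0
  have hden : (y ^ (2 * N))⁻¹ - y ^ (2 * N) = (1 - y ^ (2 * (2 * N))) / y ^ (2 * N) := by
    field_simp
    ring
  rw [evenCoeff, show 2 * (N : ℤ) = ((2 * N : ℕ) : ℤ) by push_cast; rfl, zpow_natCast, hden,
    zpow_sub_one₀ (by norm_num), zpow_natCast, inv_neg_one, div_div_eq_mul_div]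
  push_cast
  ring

lemma lambertSeries_neg_one (hy : ‖y‖ < 1) {p : ℕ} (hp : Odd p) :
    lambertSeries (-1) y p = I * oddMoment y p := by
  have hnat : Summable fun s : ℕ => oddCoeff y s * (2 * (s : ℤ) + 1) ^ p :=
    (hasSum_oddMoment hy p).summable.comp_injective Nat.cast_injective
  have hint : oddMoment y p = 2 * ∑' s : ℕ, oddCoeff y s * (2 * (s : ℤ) + 1) ^ p := by
    have hneg (s : ℕ) := oddCoeff_mul_pow_neg_succ y s p
    simp only [hp.neg_one_pow, neg_neg, one_mul] at hneg
    rw [oddMoment, tsum_of_nat_of_neg_add_one (f := fun s : ℤ => oddCoeff y s * (2 * s + 1) ^ p)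
      hnat (by simpa only [hneg] using hnat), tsum_congr hneg, two_mul]
  have hinj : Function.Injective fun s : ℕ => 2 * s + 1 := fun a b h => by simpa using h
  rw [lambertSeries, hint, ← mul_assoc, ← tsum_mul_left, ← hinj.tsum_eq]
  · refine tsum_congr fun s => ?_
    rw [oddCoeff_natCast, Odd.neg_pow ⟨s, rfl⟩, pow_succ I, pow_mul, Complex.I_sq]
    push_cast
    ring
  · intro r hr
    rcases r.even_or_odd with h | ⟨s, h⟩
    · exact absurd (by simp [h.neg_pow]) hr
    · exact ⟨s, h.symm⟩

lemma lambertSeries_one (hy0 : y ≠ 0) (hy : ‖y‖ < 1) {l : ℕ} (hl0 : l ≠ 0) (hl : Even l) :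
    lambertSeries 1 y (l + 1) = -2 * binomConv (oddMoment y) (oddMoment y) l := by
  have hsum := hasSum_evenCoeff_mul_pow hy0 hy hl0
  have hnat := (hsum.summable.comp_injective Nat.cast_injective).hasSum
  have hint := hsum.unique <| HasSum.of_nat_of_neg hnat <| hnat.congr_fun fun N => by
    rw [Function.comp_apply, evenCoeff_neg, Int.cast_neg, mul_neg, hl.neg_pow]
  rw [Int.cast_zero, mul_zero, zero_pow hl0, mul_zero, sub_zero, ← two_mul] at hint
  have hinj : Function.Injective fun N : ℕ => 2 * N := fun a b h => by simpa using h
  rw [lambertSeries, hint, ← mul_assoc, ← tsum_mul_left, ← hinj.tsum_eq]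
  · refine tsum_congr fun N => ?_
    rw [Function.comp_apply, evenCoeff_natCast hy0, (even_two_mul N).neg_pow, pow_mul I,
      Complex.I_sq]
    push_cast
    ring
  · intro r hr
    rcases r.even_or_odd' with ⟨N, rfl | rfl⟩
    · exact ⟨N, rfl⟩
    · exact absurd (by simp [(odd_two_mul_add_one N).neg_pow]) hr

end OddCoefficients

/-! ### The quadratic identity between moments -/

lemma im_halfPeriod_div_conj_pos {a b : ℝ} (ha : 0 < a) (hb : 0 < b) :
    0 < (halfPeriod a b / conj (halfPeriod a b)).im := by
  have hnorm : 0 < Complex.normSq (halfPeriod a b) := Complex.normSq_pos.2 fun h =>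
    (half_pos hb).ne' (congrArg Complex.re h)
  rw [Complex.div_im, Complex.normSq_conj, ← sub_div]
  refine div_pos ?_ hnorm
  simp only [halfPeriod, Complex.conj_re, Complex.conj_im]
  nlinarith [mul_pos ha hb]

lemma bilateralMoment_eq_lambertSeries {ε a b : ℝ} (hε : ε ^ 2 = 1) (ha : 0 < a) (hb : 0 < b)
    {j : ℕ} (hj : ε = 1 → 1 ≤ j) :
    (bilateralMoment ε a b j : ℂ) = 4 * (-π * I / (2 * conj (halfPeriod a b))) ^ (2 * j + 2) *
      lambertSeries ε (Complex.exp (π * I * (halfPeriod a b / conj (halfPeriod a b)) / 2))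
        (2 * j + 1) := by
  have hβ : conj (halfPeriod a b) ≠ 0 := fun h => (half_pos hb).ne' (congrArg Complex.re h)
  have h := tsum_tsum_latticeTerm (ε := ε) (by exact_mod_cast hε) hβ
    (im_halfPeriod_div_conj_pos ha hb) (p := 2 * j + 1) (by omega)
  rw [(hasSum_bilateralMoment hε ha hb hj).tsum_eq] at h
  linear_combination 4 * h

theorem Iplus_Iminus_convolution_identity_general {a b : ℝ} (ha : 0 < a) (hb : 0 < b) (n : ℕ) :
    ∑ j ∈ Finset.range (n + 1), ((n : ℝ) - 3 * (j : ℝ)) *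
      (Nat.choose (2 * n + 3) (2 * j + 1) : ℝ) *
        bilateralMoment (-1) a b j * bilateralMoment 1 a b (n - j + 1) = 0 := by
  set κ := -π * I / (2 * conj (halfPeriod a b))
  set y := Complex.exp (π * I * (halfPeriod a b / conj (halfPeriod a b)) / 2)
  have hy0 : y ≠ 0 := Complex.exp_ne_zero _
  have hy : ‖y‖ < 1 := norm_cexp_pi_mul_I_mul_div_two_lt_one (im_halfPeriod_div_conj_pos ha hb)
  have hplus (j : ℕ) : (bilateralMoment (-1) a b j : ℂ) =
      4 * κ ^ (2 * j + 2) * (I * oddMoment y (2 * j + 1)) := by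
    rw [bilateralMoment_eq_lambertSeries (by norm_num) ha hb (by norm_num)]
    push_cast
    rw [lambertSeries_neg_one hy (odd_two_mul_add_one j)]
  have hminus (m : ℕ) : (bilateralMoment 1 a b (m + 1) : ℂ) = 4 * κ ^ (2 * (m + 1) + 2) *
      (-2 * binomConv (oddMoment y) (oddMoment y) (2 * (m + 1))) := by
    rw [bilateralMoment_eq_lambertSeries (by norm_num) ha hb (by simp), Complex.ofReal_one,
      lambertSeries_one hy0 hy (by simp) (even_two_mul (m + 1))]
  rw [← Complex.ofReal_eq_zero, ← mul_zero (-32 * I * κ ^ (2 * n + 6)),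
    ← sum_sub_three_mul_choose_mul_binomConv_self_of_even (fun _ => oddMoment_of_even y) n,
    Finset.mul_sum]
  push_cast
  refine Finset.sum_congr rfl fun j hj => ?_
  have hj' := Finset.mem_range_succ_iff.1 hj
  rw [hplus, hminus, show 2 * n + 6 = (2 * j + 2) + (2 * (n - j + 1) + 2) by omega, pow_add]
  ring

/-! ### Kuznetsov's integrals -/

lemma ellipticK_pos {k : ℝ} (hk : k ^ 2 < 1) : 0 < ellipticK k := by
  have hpos (θ : ℝ) : 0 < 1 - k ^ 2 * Real.sin θ ^ 2 := by
    have := mul_le_of_le_one_right (sq_nonneg k) (Real.sin_sq_le_one θ)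
    linarith
  refine intervalIntegral.intervalIntegral_pos_of_pos (Continuous.intervalIntegrable ?_ _ _)
    (fun θ => Real.rpow_pos_of_pos (hpos θ) _) (by positivity)
  exact Continuous.rpow_const (by fun_prop) fun θ => Or.inl (hpos θ).ne'

lemma Iplus_eq_bilateralMoment (k : ℝ) (n : ℕ) :
    Iplus k n = 1 / 2 * bilateralMoment (-1) (ellipticK k) (ellipticK √(1 - k ^ 2)) n := by
  simp only [Iplus, bilateralMoment, coshCosMoment, neg_one_mul, sub_neg_eq_add,
    add_comm (Real.cos _)]
  ring

lemma Iminus_eq_bilateralMoment (k : ℝ) (n : ℕ) :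
    Iminus k n = -bilateralMoment 1 (ellipticK k) (ellipticK √(1 - k ^ 2)) (n + 1) := by
  simp only [Iminus, bilateralMoment, coshCosMoment, one_mul, ← neg_sub (Real.cosh _) (Real.cos _),
    div_neg, integral_neg]
  ring

theorem Iplus_Iminus_convolution_identity (k : ℝ) (hk : k ∈ Set.Ioo (0 : ℝ) 1) (n : ℕ) :
    ∑ j ∈ Finset.range (n + 1),
      ((n : ℝ) - 3 * (j : ℝ)) * (Nat.choose (2 * n + 3) (2 * j + 1) : ℝ) *
        Iplus k j * Iminus k (n - j) = 0 := by
  have hk1 : k ^ 2 < 1 := pow_lt_one₀ hk.1.le hk.2 two_ne_zero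
  have hk' : √(1 - k ^ 2) ^ 2 < 1 := by
    rw [Real.sq_sqrt (sub_pos.2 hk1).le]
    exact sub_lt_self 1 (pow_pos hk.1 2)
  have h := Iplus_Iminus_convolution_identity_general (ellipticK_pos hk1) (ellipticK_pos hk') n
  rw [← mul_zero (-1 / 2 : ℝ), ← h, Finset.mul_sum]
  refine Finset.sum_congr rfl fun j _ => ?_
  rw [Iplus_eq_bilateralMoment, Iminus_eq_bilateralMoment]
  ring
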